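/- arXiv:1711.07737 — 2 statements merged into one kernel-verified Lean document; each statement's English description precedes it below -/
import Mathlib

section
/- Let X be a median space and let C1, C2 be gate-convex subsets with gate-projections π1, π2. Then the shores S1 := π1(C2) and S2 := π2(C1) coincide, respectively, with the set of first coordinates and the set of second coordinates of pairs of gates for (C1,C2); the restriction π2|_{S1} : S1 → S2 is a bijective isometry with inverse π1|_{S2}; and for every pair of gates (x1,x2) one has π1(I(x1,x2)) = {x1} and π2(I(x1,x2)) = {x2}, so that the union B := ⋃_{x1 ∈ S1} I(x1, π2(x1)) defining the bridge is a disjoint union. -/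
open Metric Filter Set

universe u

/-- The metric interval between `a` and `b`: points lying between `a` and `b`. -/
def mInterval {X : Type u} [MetricSpace X] (a b : X) : Set X :=
  {c : X | dist a c + dist c b = dist a b}

/-- A subset of a metric space is convex if it contains the interval between any
two of its points. -/
def MConvex {X : Type u} [MetricSpace X] (C : Set X) : Prop :=
  ∀ a ∈ C, ∀ b ∈ C, mInterval a b ⊆ C

/-- `w` is the median of `x, y, z`. -/
def IsMedianPoint {X : Type u} [MetricSpace X] (x y z w : X) : Prop :=
  w ∈ mInterval x y ∧ w ∈ mInterval y z ∧ w ∈ mInterval x z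

/-- A median space: every triple of points has a unique median. -/
def IsMedianSpace (X : Type u) [MetricSpace X] : Prop :=
  ∀ x y z : X, ∃! w : X, IsMedianPoint x y z w

/-- A halfspace: a subset such that both it and its complement are convex. -/
def IsHalfspace {X : Type u} [MetricSpace X] (h : Set X) : Prop :=
  MConvex h ∧ MConvex hᶜ

/-- Two halfspaces are transverse. -/
def Transv {X : Type u} [MetricSpace X] (h k : Set X) : Prop :=
  (h ∩ k).Nonempty ∧ (h ∩ kᶜ).Nonempty ∧ (hᶜ ∩ k).Nonempty ∧ (hᶜ ∩ kᶜ).Nonempty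

/-- A wall: an unordered pair `{h, hᶜ}` with `h` a halfspace. -/
def IsWall {X : Type u} [MetricSpace X] (w : Set (Set X)) : Prop :=
  ∃ h : Set X, IsHalfspace h ∧ w = {h, hᶜ}

/-- Two walls are transverse if a side of the first is transverse to a side of the second. -/
def WallTransv {X : Type u} [MetricSpace X] (w₁ w₂ : Set (Set X)) : Prop :=
  ∃ h ∈ w₁, ∃ k ∈ w₂, Transv h k

/-- `X` has rank at most `r`: every set of pairwise transverse walls has cardinality `≤ r`. -/
def RankLE (X : Type u) [MetricSpace X] (r : ℕ) : Prop :=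
  ∀ W : Finset (Set (Set X)), (∀ w ∈ W, IsWall w) →
    (W : Set (Set (Set X))).Pairwise WallTransv → W.card ≤ r

/-- `X` has finite rank. -/
def HasFiniteRank (X : Type u) [MetricSpace X] : Prop :=
  ∃ r : ℕ, RankLE X r

/-- `y` is a gate for `(x, C)`: `y ∈ C` and `y` lies between `x` and every point of `C`. -/
def IsGate {X : Type u} [MetricSpace X] (x : X) (C : Set X) (y : X) : Prop :=
  y ∈ C ∧ ∀ z ∈ C, y ∈ mInterval x z

/-- `C` is gate-convex: every point of `X` has a gate in `C`. -/
def GateConvex {X : Type u} [MetricSpace X] (C : Set X) : Prop :=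
  ∀ x : X, ∃ y, IsGate x C y

/-- `(x₁, x₂)` is a pair of gates for `(C₁, C₂)`. -/
def IsGatePair {X : Type u} [MetricSpace X] (C₁ C₂ : Set X) (x₁ x₂ : X) : Prop :=
  IsGate x₂ C₁ x₁ ∧ IsGate x₁ C₂ x₂

/-!
If `x` is the gate of `y` in `C`, then `x` is also the gate in `C` of every point of `I(y, x)`.
For `y ∈ C₂`, the point `π₂ (π₁ y)` lies in `I(π₁ y, y)`, so its gate in `C₁` is again `π₁ y`:
projecting back and forth stabilises after one step, which produces the pairs of gates. The same
remark shows that both projections are constant on `I(x₁, x₂)` for a pair of gates `(x₁, x₂)`, so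
the intervals that form the bridge lie in distinct fibres of `π₁`. Finally, gate-projections are
1-Lipschitz, and mutually inverse 1-Lipschitz maps are isometries.
-/

/-- `π` is the gate-projection onto `C`, encoded as a self-map of `X` so that two projections
can be composed. -/
def IsGateProjection {X : Type u} [MetricSpace X] (C : Set X) (π : X → X) : Prop :=
  ∀ x : X, IsGate x C (π x)

section

variable {X : Type u} [MetricSpace X]

theorem mInterval_comm (a b : X) : mInterval a b = mInterval b a := by
  ext c
  simp only [mInterval, mem_ofPred_eq, dist_comm, add_comm]

theorem left_mem_mInterval (a b : X) : a ∈ mInterval a b := by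
  simp [mInterval]

namespace IsGate

variable {C D : Set X} {x x' y y' c : X}

theorem dist_le_dist (h : IsGate x C y) (h' : IsGate x' C y') : dist y y' ≤ dist x x' := by
  have through_y : dist x y + dist y y' = dist x y' := h.2 y' h'.1
  have through_y' : dist x' y' + dist y' y = dist x' y := h'.2 y h.1
  have upper : dist x y' ≤ dist x x' + dist x' y' := dist_triangle x x' y'
  have upper' : dist x' y ≤ dist x' x + dist x y := dist_triangle x' x y
  linarith [dist_comm y y', dist_comm x x']

theorem unique (h : IsGate x C y) (h' : IsGate x C y') : y = y' :=
  dist_le_zero.1 ((h.dist_le_dist h').trans_eq (dist_self x))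

theorem of_mem_mInterval (h : IsGate x C y) (hc : c ∈ mInterval x y) : IsGate c C y := by
  refine ⟨h.1, fun z hz => le_antisymm ?_ (dist_triangle c y z)⟩
  have through_c : dist x c + dist c y = dist x y := hc
  have through_y : dist x y + dist y z = dist x z := h.2 z hz
  linarith [dist_triangle x c z]

theorem isGatePair (hx : x ∈ D) (h : IsGate x C y) (h' : IsGate y D y') :
    IsGatePair C D y y' :=
  ⟨h.of_mem_mInterval (mInterval_comm y x ▸ h'.2 x hx), h'⟩

end IsGate

theorem isGatePair_comm {C₁ C₂ : Set X} {x₁ x₂ : X} :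
    IsGatePair C₁ C₂ x₁ x₂ ↔ IsGatePair C₂ C₁ x₂ x₁ :=
  and_comm

namespace IsGatePair

variable {C₁ C₂ : Set X} {x₁ x₂ y₁ y₂ c : X}

theorem dist_eq_dist (hx : IsGatePair C₁ C₂ x₁ x₂) (hy : IsGatePair C₁ C₂ y₁ y₂) :
    dist x₂ y₂ = dist x₁ y₁ :=
  le_antisymm (hx.2.dist_le_dist hy.2) (hx.1.dist_le_dist hy.1)

theorem isGate_left_of_mem_mInterval (h : IsGatePair C₁ C₂ x₁ x₂) (hc : c ∈ mInterval x₁ x₂) :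
    IsGate c C₁ x₁ :=
  h.1.of_mem_mInterval (mInterval_comm x₁ x₂ ▸ hc)

theorem disjoint_mInterval (hx : IsGatePair C₁ C₂ x₁ x₂) (hy : IsGatePair C₁ C₂ y₁ y₂)
    (hne : x₁ ≠ y₁) : Disjoint (mInterval x₁ x₂) (mInterval y₁ y₂) :=
  disjoint_left.2 fun _ hcx hcy =>
    hne ((hx.isGate_left_of_mem_mInterval hcx).unique (hy.isGate_left_of_mem_mInterval hcy))

end IsGatePair

namespace IsGateProjection

variable {C C₁ C₂ : Set X} {π π₁ π₂ : X → X}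

theorem eq_of_isGate (hπ : IsGateProjection C π) {x y : X} (h : IsGate x C y) : π x = y :=
  (hπ x).unique h

theorem isGatePair (hπ₁ : IsGateProjection C₁ π₁) (hπ₂ : IsGateProjection C₂ π₂) {a : X}
    (ha : a ∈ π₁ '' C₂) : IsGatePair C₁ C₂ a (π₂ a) := by
  obtain ⟨y, hy, rfl⟩ := ha
  exact (hπ₁ y).isGatePair hy (hπ₂ (π₁ y))

theorem image_eq_setOf_isGatePair (hπ₁ : IsGateProjection C₁ π₁) (hC₂ : GateConvex C₂) :
    π₁ '' C₂ = {x₁ | ∃ x₂, IsGatePair C₁ C₂ x₁ x₂} := by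
  apply Subset.antisymm
  · rintro _ ⟨y, hy, rfl⟩
    obtain ⟨x₂, hx₂⟩ := hC₂ (π₁ y)
    exact ⟨x₂, (hπ₁ y).isGatePair hy hx₂⟩
  · rintro x₁ ⟨x₂, h⟩
    exact ⟨x₂, h.2.1, hπ₁.eq_of_isGate h.1⟩

theorem leftInvOn_image (hπ₁ : IsGateProjection C₁ π₁) (hπ₂ : IsGateProjection C₂ π₂) :
    LeftInvOn π₁ π₂ (π₁ '' C₂) :=
  fun _ ha => hπ₁.eq_of_isGate (hπ₁.isGatePair hπ₂ ha).1

theorem image_image (hπ₁ : IsGateProjection C₁ π₁) (hπ₂ : IsGateProjection C₂ π₂) :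
    π₂ '' (π₁ '' C₂) = π₂ '' C₁ := by
  apply Subset.antisymm
  · exact image_mono (image_subset_iff.2 fun y _ => (hπ₁ y).1)
  · rintro _ ⟨x, hx, rfl⟩
    exact ⟨π₁ (π₂ x), mem_image_of_mem π₁ (hπ₂ x).1,
      hπ₂.leftInvOn_image hπ₁ (mem_image_of_mem π₂ hx)⟩

theorem image_mInterval (hπ₁ : IsGateProjection C₁ π₁) {x₁ x₂ : X}
    (h : IsGatePair C₁ C₂ x₁ x₂) : π₁ '' mInterval x₁ x₂ = {x₁} :=
  eq_singleton_iff_nonempty_unique_mem.2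
    ⟨⟨_, mem_image_of_mem π₁ (left_mem_mInterval x₁ x₂)⟩,
      forall_mem_image.2 fun _ hc => hπ₁.eq_of_isGate (h.isGate_left_of_mem_mInterval hc)⟩

end IsGateProjection

end

theorem shores_and_bridge_decomposition_general
    {X : Type u} [MetricSpace X] {C₁ C₂ : Set X} {π₁ π₂ : X → X}
    (hπ₁ : IsGateProjection C₁ π₁) (hπ₂ : IsGateProjection C₂ π₂) :
    (π₁ '' C₂ = {x₁ : X | ∃ x₂ : X, IsGatePair C₁ C₂ x₁ x₂}) ∧
    (π₂ '' C₁ = {x₂ : X | ∃ x₁ : X, IsGatePair C₁ C₂ x₁ x₂}) ∧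
    (π₂ '' (π₁ '' C₂) = π₂ '' C₁) ∧
    (∀ a ∈ π₁ '' C₂, ∀ b ∈ π₁ '' C₂, dist (π₂ a) (π₂ b) = dist a b) ∧
    (∀ a ∈ π₁ '' C₂, π₁ (π₂ a) = a) ∧
    (∀ b ∈ π₂ '' C₁, π₂ (π₁ b) = b) ∧
    (∀ x₁ x₂ : X, IsGatePair C₁ C₂ x₁ x₂ →
      π₁ '' mInterval x₁ x₂ = {x₁} ∧ π₂ '' mInterval x₁ x₂ = {x₂}) ∧
    (∀ a ∈ π₁ '' C₂, ∀ b ∈ π₁ '' C₂, a ≠ b →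
      Disjoint (mInterval a (π₂ a)) (mInterval b (π₂ b))) := by
  have pair : ∀ a ∈ π₁ '' C₂, IsGatePair C₁ C₂ a (π₂ a) := fun _ => hπ₁.isGatePair hπ₂
  refine ⟨hπ₁.image_eq_setOf_isGatePair fun x => ⟨π₂ x, hπ₂ x⟩, ?_, hπ₁.image_image hπ₂,
    fun a ha b hb => (pair a ha).dist_eq_dist (pair b hb),
    hπ₁.leftInvOn_image hπ₂, hπ₂.leftInvOn_image hπ₁, fun x₁ x₂ h => ⟨hπ₁.image_mInterval h, ?_⟩,
    fun a ha b hb => (pair a ha).disjoint_mInterval (pair b hb)⟩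
  · simp only [isGatePair_comm (C₁ := C₁)]
    exact hπ₂.image_eq_setOf_isGatePair fun x => ⟨π₁ x, hπ₁ x⟩
  · rw [mInterval_comm]
    exact hπ₂.image_mInterval (isGatePair_comm.1 h)

/-- For gate-convex subsets `C₁, C₂` of a median space with
gate-projections `π₁, π₂`: the shores `S₁ = π₁ '' C₂` and `S₂ = π₂ '' C₁`
coincide with the sets of first (resp. second) coordinates of pairs of gates;
`π₂` restricted to `S₁` is a bijective isometry onto `S₂` with inverse `π₁|_{S₂}`;
for every pair of gates `(x₁,x₂)` one has `π₁ '' I(x₁,x₂) = {x₁}` and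
`π₂ '' I(x₁,x₂) = {x₂}`; and the union `B = ⋃_{x₁ ∈ S₁} I(x₁, π₂ x₁)` defining
the bridge is a disjoint union. -/
theorem shores_and_bridge_decomposition
    {X : Type u} [MetricSpace X] (hX : IsMedianSpace X)
    (C₁ C₂ : Set X) (π₁ π₂ : X → X)
    (hπ₁ : ∀ x : X, IsGate x C₁ (π₁ x)) (hπ₂ : ∀ x : X, IsGate x C₂ (π₂ x)) :
    (π₁ '' C₂ = {x₁ : X | ∃ x₂ : X, IsGatePair C₁ C₂ x₁ x₂}) ∧
    (π₂ '' C₁ = {x₂ : X | ∃ x₁ : X, IsGatePair C₁ C₂ x₁ x₂}) ∧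
    (π₂ '' (π₁ '' C₂) = π₂ '' C₁) ∧
    (∀ a ∈ π₁ '' C₂, ∀ b ∈ π₁ '' C₂, dist (π₂ a) (π₂ b) = dist a b) ∧
    (∀ a ∈ π₁ '' C₂, π₁ (π₂ a) = a) ∧
    (∀ b ∈ π₂ '' C₁, π₂ (π₁ b) = b) ∧
    (∀ x₁ x₂ : X, IsGatePair C₁ C₂ x₁ x₂ →
      π₁ '' mInterval x₁ x₂ = {x₁} ∧ π₂ '' mInterval x₁ x₂ = {x₂}) ∧
    (∀ a ∈ π₁ '' C₂, ∀ b ∈ π₁ '' C₂, a ≠ b →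
      Disjoint (mInterval a (π₂ a)) (mInterval b (π₂ b))) :=
  shores_and_bridge_decomposition_general hπ₁ hπ₂
end

section
/- Let X be a complete, finite-rank median space, x ∈ X, σ an ultrafilter on 𝓗(X), and Ω ⊆ σ \ σ_x a minimal UBS. Then (a) there exists a strongly reduced UBS contained in Ω, and every UBS contained in that UBS is again strongly reduced; and (b) if Ω itself is strongly reduced, then Ω is reduced. -/
open Metric Filter Set

universe u

/-- An ultrafilter on the set of halfspaces of `X`: a set of halfspaces, any two
of which intersect, containing exactly one of `h, hᶜ` for every halfspace `h`. -/
def UltrafilterOn (X : Type u) [MetricSpace X] (σ : Set (Set X)) : Prop :=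
  (∀ h ∈ σ, IsHalfspace h) ∧
  (∀ h ∈ σ, ∀ k ∈ σ, (h ∩ k).Nonempty) ∧
  ∀ h : Set X, IsHalfspace h → ((h ∈ σ ∧ hᶜ ∉ σ) ∨ (hᶜ ∈ σ ∧ h ∉ σ))

/-- The principal ultrafilter of halfspaces containing the point `x`. -/
def sigmaPt {X : Type u} [MetricSpace X] (x : X) : Set (Set X) :=
  {h : Set X | IsHalfspace h ∧ x ∈ h}

/-- A diverging chain of halfspaces (with respect to the basepoint `x`):
a nested sequence of halfspaces whose distance from `x` tends to infinity. -/
def DivChain {X : Type u} [MetricSpace X] (x : X) (c : ℕ → Set X) : Prop :=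
  (∀ n, IsHalfspace (c n)) ∧ (∀ n, c (n + 1) ⊆ c n) ∧
    Tendsto (fun n => infDist x (c n)) atTop atTop

/-- A set of halfspaces is inseparable if it contains every halfspace squeezed
between two of its members. -/
def Insep {X : Type u} [MetricSpace X] (Ω : Set (Set X)) : Prop :=
  ∀ j : Set X, IsHalfspace j → ∀ h ∈ Ω, ∀ k ∈ Ω, h ⊆ j → j ⊆ k → j ∈ Ω

/-- A unidirectional boundary set (UBS) for the ultrafilter `σ`, with basepoint
`x`: an inseparable subset of `σ \ σ_x` containing a diverging chain. -/
def IsUBS {X : Type u} [MetricSpace X] (x : X) (σ Ω : Set (Set X)) : Prop :=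
  Ω ⊆ σ \ sigmaPt x ∧ Insep Ω ∧ ∃ c : ℕ → Set X, DivChain x c ∧ ∀ n, c n ∈ Ω

/-- `Ω₁ ≼ Ω₂`: the halfspaces of `Ω₁ \ Ω₂` lie at uniformly bounded distance
from `x` (almost containment of UBS's). -/
def AlmostLE {X : Type u} [MetricSpace X] (x : X) (Ω₁ Ω₂ : Set (Set X)) : Prop :=
  ∃ M : ℝ, ∀ h ∈ Ω₁ \ Ω₂, infDist x h ≤ M

/-- Equivalence of UBS's. -/
def UBSEquiv {X : Type u} [MetricSpace X] (x : X) (Ω₁ Ω₂ : Set (Set X)) : Prop :=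
  AlmostLE x Ω₁ Ω₂ ∧ AlmostLE x Ω₂ Ω₁

/-- A UBS is minimal if every UBS almost contained in it almost contains it. -/
def MinimalUBS {X : Type u} [MetricSpace X] (x : X) (σ Ω : Set (Set X)) : Prop :=
  IsUBS x σ Ω ∧ ∀ Ω₀ : Set (Set X), IsUBS x σ Ω₀ → AlmostLE x Ω₀ Ω → AlmostLE x Ω Ω₀

/-- A set of halfspaces is reduced if none of its members is transverse to a
diverging chain of halfspaces contained in it. -/
def ReducedUBS {X : Type u} [MetricSpace X] (x : X) (Ω : Set (Set X)) : Prop :=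
  ∀ k ∈ Ω, ¬ ∃ c : ℕ → Set X, DivChain x c ∧ (∀ n, c n ∈ Ω) ∧ ∀ n, Transv k (c n)

/-- A set of halfspaces is strongly reduced if it is a finite disjoint union of
subsets, each totally ordered by inclusion and containing a diverging chain. -/
def StronglyReducedUBS {X : Type u} [MetricSpace X] (x : X) (Ω : Set (Set X)) : Prop :=
  ∃ (k : ℕ) (C : Fin k → Set (Set X)), 1 ≤ k ∧
    (Set.univ : Set (Fin k)).PairwiseDisjoint C ∧
    (⋃ i, C i) = Ω ∧
    ∀ i, IsChain (· ⊆ ·) (C i) ∧ ∃ c : ℕ → Set X, DivChain x c ∧ ∀ n, c n ∈ C i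

/-!
The halfspaces of `σ` not containing `x` pairwise intersect and all miss `x`, so two of them are
transverse as soon as neither contains the other. Finite rank therefore bounds the antichains of
`Ω`, and Dilworth's theorem splits `Ω` into finitely many chains. On some of these chains the
distance from `x` is bounded; discarding from `Ω` all halfspaces up to the largest such bound leaves
only chains on which it is unbounded, and those contain diverging chains. By minimality a sub-UBS
`Ω₁` contains all far enough members of `Ω`, so it still meets each surviving chain in an unbounded
set.

For the second part, let `k ∈ Ω` be transverse to a diverging chain `c` in `Ω`. By minimality the
inseparable closure of `c` contains all far enough members of `Ω`, among them one contained in `k`,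
taken in the same chain of the decomposition as `k`. Hence some `c m` is contained in `k`,
contradicting transversality.
-/

section Dilworth

open Relation Function

variable {α : Type*} [PartialOrder α] {r : ℕ}

theorem exists_injective_sum_fin_of_antichain_card_le [Finite α]
    (hr : ∀ A : Finset α, IsAntichain (· ≤ ·) (A : Set α) → A.card ≤ r) :
    ∃ f : α → α ⊕ Fin r, Injective f ∧ ∀ a b, f a = .inl b → a < b := by
  classical
  cases nonempty_fintype α
  let t (a : α) : Finset (α ⊕ Fin r) := (Finset.univ.filter (a < ·)).disjSum Finset.univ
  suffices hall : ∀ s : Finset α, s.card ≤ (s.biUnion t).card by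
    obtain ⟨f, hf, hft⟩ := (Finset.all_card_le_biUnion_card_iff_exists_injective t).1 hall
    exact ⟨f, hf, fun a b hab => by simpa [t, hab] using hft a⟩
  -- The elements of `s` not above another element of `s` are the minimal ones. They form an
  -- antichain, and the `r` extra targets make up for them.
  intro s
  obtain rfl | ⟨a₀, ha₀⟩ := s.eq_empty_or_nonempty
  · simp
  let minimals := s.filter (Minimal (· ∈ s))
  let above := Finset.univ.filter fun b => ∃ a ∈ s, a < b
  have hcover : s ⊆ minimals ∪ above := fun b hb => by
    by_cases hmin : Minimal (· ∈ s) b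
    · exact Finset.mem_union_left _ (Finset.mem_filter.2 ⟨hb, hmin⟩)
    · obtain ⟨a, hab, ha⟩ := (not_minimal_iff_exists_lt hb).1 hmin
      exact Finset.mem_union_right _ (Finset.mem_filter.2 ⟨Finset.mem_univ b, a, ha, hab⟩)
  have hminimals : minimals.card ≤ r :=
    hr _ ((setOfPred_minimal_antichain (· ∈ s)).subset fun a ha => (Finset.mem_filter.1 ha).2)
  have htargets : above.disjSum Finset.univ ⊆ s.biUnion t := by
    rintro (b | i) hmem
    · obtain ⟨a, ha, hab⟩ := (Finset.mem_filter.1 (Finset.inl_mem_disjSum.1 hmem)).2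
      exact Finset.mem_biUnion.2 ⟨a, ha, by simpa [t] using hab⟩
    · exact Finset.mem_biUnion.2 ⟨a₀, ha₀, by simp [t]⟩
  calc s.card ≤ minimals.card + above.card :=
        (Finset.card_le_card hcover).trans (Finset.card_union_le _ _)
    _ ≤ above.card + r := by omega
    _ = (above.disjSum (Finset.univ : Finset (Fin r))).card := by simp
    _ ≤ (s.biUnion t).card := Finset.card_le_card htargets

theorem exists_chain_coloring_of_injective_sum [Finite α] {ι : Type*} {f : α → α ⊕ ι}
    (hf : Injective f) (hlt : ∀ a b, f a = .inl b → a < b) :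
    ∃ χ : α → ι, ∀ a b, χ a = χ b → a ≤ b ∨ b ≤ a := by
  -- Following `f` upwards from `a` ends in a label; by injectivity, the elements leading to a
  -- given label form a single path.
  let pred (b a : α) : Prop := f a = .inl b
  have hpred_unique : Relator.RightUnique pred := fun _ _ _ ha ha' => hf (ha.trans ha'.symm)
  have hle_of_path : ReflTransGen pred ≤ (· ≥ ·) :=
    reflTransGen_le_of_le fun b a hab => (hlt a b hab).le
  have hpath (a : α) : ∃ top label, f top = .inr label ∧ ReflTransGen pred top a := by
    induction a using WellFoundedGT.induction with
    | ind a ih =>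
      cases hfa : f a with
      | inr label => exact ⟨a, label, hfa, .refl⟩
      | inl b =>
        obtain ⟨top, label, htop, hpath⟩ := ih b (hlt a b hfa)
        exact ⟨top, label, htop, hpath.tail hfa⟩
  choose top label htop hpath using hpath
  refine ⟨label, fun a b hab => ?_⟩
  have htop_eq : top a = top b := hf (by rw [htop, htop, hab])
  exact ((hpath a).total_of_right_unique hpred_unique (htop_eq ▸ hpath b)).symm.imp
    (hle_of_path _ _) (hle_of_path _ _)

theorem antichain_card_le_subtype {p : α → Prop}
    (hr : ∀ A : Finset α, (∀ a ∈ A, p a) → IsAntichain (· ≤ ·) (A : Set α) → A.card ≤ r)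
    (A : Finset {a // p a}) (hA : IsAntichain (· ≤ ·) (A : Set {a // p a})) : A.card ≤ r := by
  rw [← A.card_map (Embedding.subtype p)]
  refine hr _ (fun a ha => Finset.property_of_mem_map_subtype A ha) ?_
  rw [Finset.coe_map]
  exact hA.image_embedding (OrderEmbedding.subtype p)

theorem exists_chain_coloring_of_antichain_card_le
    (hr : ∀ A : Finset α, IsAntichain (· ≤ ·) (A : Set α) → A.card ≤ r) :
    ∃ χ : α → Fin r, ∀ a b, χ a = χ b → a ≤ b ∨ b ≤ a := by
  classical
  have hfinite (s : Finset α) : ∃ χ : s → Fin r, ∀ a b, χ a = χ b → a ≤ b ∨ b ≤ a := by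
    obtain ⟨f, hf, hlt⟩ := exists_injective_sum_fin_of_antichain_card_le
      (antichain_card_le_subtype (p := (· ∈ s)) fun A _ => hr A)
    exact exists_chain_coloring_of_injective_sum hf hlt
  choose g hg using hfinite
  obtain ⟨χ, hχ⟩ := Finset.rado_selection_subtype (β := fun _ => Fin r) g
  refine ⟨χ, fun a b hab => ?_⟩
  obtain ⟨t, hsub, ht⟩ := hχ {a, b}
  have ha := ht ⟨a, by simp⟩
  have hb := ht ⟨b, by simp⟩
  exact hg t _ _ (ha.symm.trans (hab.trans hb))

theorem exists_chain_partition_of_antichain_card_le {s : Set α}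
    (hr : ∀ A : Finset α, (A : Set α) ⊆ s → IsAntichain (· ≤ ·) (A : Set α) → A.card ≤ r) :
    ∃ C : Fin r → Set α, Pairwise (Disjoint on C) ∧ ⋃ i, C i = s ∧
      ∀ i, IsChain (· ≤ ·) (C i) := by
  obtain ⟨χ, hχ⟩ := exists_chain_coloring_of_antichain_card_le
    (antichain_card_le_subtype (p := (· ∈ s)) hr)
  refine ⟨fun i => Subtype.val '' (χ ⁻¹' {i}), fun i j hij => ?_, ?_, fun i => ?_⟩
  · exact (disjoint_image_iff Subtype.val_injective).2 (pairwise_disjoint_fiber χ hij)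
  · rw [← image_iUnion, ← preimage_iUnion, iUnion_of_singleton, preimage_univ, image_univ,
      Subtype.range_coe]
  · rintro _ ⟨a, ha, rfl⟩ _ ⟨b, hb, rfl⟩ -
    exact hχ a b (ha.trans hb.symm)

end Dilworth

theorem exists_nonneg_forall_not_bddAbove_of_lt {ι : Type*} [Finite ι] (s : ι → Set ℝ) :
    ∃ N, 0 ≤ N ∧ ∀ i, (∃ a ∈ s i, N < a) → ¬ BddAbove (s i) := by
  obtain ⟨N, hN⟩ : BddAbove (⋃ i ∈ {i | BddAbove (s i)}, s i) :=
    (toFinite _).bddAbove_biUnion.2 fun _ hi => hi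
  refine ⟨max 0 N, le_max_left _ _, ?_⟩
  rintro i ⟨a, ha, hlt⟩ hbdd
  exact (max_lt_iff.1 hlt).2.not_ge (hN (mem_biUnion hbdd ha))

section Halfspaces

open Function

variable {X : Type u} [MetricSpace X] {x : X} {σ Ω Ω₁ : Set (Set X)} {h k : Set X}

theorem nonempty_of_infDist_pos (hpos : 0 < infDist x h) : h.Nonempty := by
  rw [nonempty_iff_ne_empty]
  rintro rfl
  exact hpos.ne' infDist_empty

theorem subset_of_infDist_lt (htotal : h ⊆ k ∨ k ⊆ h) (hk : k.Nonempty)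
    (hlt : infDist x k < infDist x h) : h ⊆ k :=
  htotal.resolve_right fun hkh => hlt.not_ge (infDist_le_infDist_of_subset hkh hk)

theorem transv_of_not_subset (hinter : (h ∩ k).Nonempty) (hxh : x ∉ h) (hxk : x ∉ k)
    (hhk : ¬ h ⊆ k) (hkh : ¬ k ⊆ h) : Transv h k :=
  ⟨hinter, inter_compl_nonempty_iff.2 hhk, by rwa [inter_comm, inter_compl_nonempty_iff],
    ⟨x, hxh, hxk⟩⟩

theorem RankLE.card_le_of_pairwise_transv {r : ℕ} (hr : RankLE X r) {A : Finset (Set X)}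
    (hhalf : ∀ h ∈ A, IsHalfspace h) (htransv : (A : Set (Set X)).Pairwise Transv) :
    A.card ≤ r := by
  classical
  let wall (h : Set X) : Set (Set X) := {h, hᶜ}
  have hinj : InjOn wall A := fun h hh k hk hwall => by
    by_contra hne
    have hcompl : h = kᶜ := (show h ∈ wall k from hwall ▸ mem_insert h _).resolve_left hne
    obtain ⟨y, hyh, hyk⟩ := (htransv hh hk hne).1
    exact (hcompl ▸ hyh) hyk
  rw [← Finset.card_image_of_injOn hinj]
  refine hr _ (fun w hw => ?_) fun w hw w' hw' hne => ?_
  · obtain ⟨h, hh, rfl⟩ := Finset.mem_image.1 hw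
    exact ⟨h, hhalf h hh, rfl⟩
  · obtain ⟨h, hh, rfl⟩ := Finset.mem_image.1 hw
    obtain ⟨k, hk, rfl⟩ := Finset.mem_image.1 hw'
    exact ⟨h, mem_insert _ _, k, mem_insert _ _, htransv hh hk fun hhk => hne (hhk ▸ rfl)⟩

theorem RankLE.exists_chain_partition {r : ℕ} (hr : RankLE X r) (hhalf : ∀ h ∈ Ω, IsHalfspace h)
    (hinter : ∀ h ∈ Ω, ∀ k ∈ Ω, (h ∩ k).Nonempty) (hx : ∀ h ∈ Ω, x ∉ h) :
    ∃ C : Fin r → Set (Set X), Pairwise (Disjoint on C) ∧ ⋃ i, C i = Ω ∧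
      ∀ i, IsChain (· ⊆ ·) (C i) :=
  exists_chain_partition_of_antichain_card_le fun _ hAΩ hA =>
    hr.card_le_of_pairwise_transv (fun h hh => hhalf h (hAΩ hh)) fun h hh k hk hne =>
      transv_of_not_subset (hinter h (hAΩ hh) k (hAΩ hk)) (hx h (hAΩ hh)) (hx k (hAΩ hk))
        (hA hh hk hne) (hA hk hh hne.symm)

theorem DivChain.shift {c : ℕ → Set X} (hc : DivChain x c) (m : ℕ) :
    DivChain x fun n => c (n + m) :=
  ⟨fun n => hc.1 _, fun n => by simpa only [Nat.add_right_comm] using hc.2.1 (n + m),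
    hc.2.2.comp (tendsto_add_atTop_nat m)⟩

theorem exists_divChain_of_not_bddAbove {C : Set (Set X)} (hhalf : ∀ h ∈ C, IsHalfspace h)
    (hchain : IsChain (· ⊆ ·) C) (hunbdd : ¬ BddAbove (infDist x '' C)) :
    ∃ c : ℕ → Set X, DivChain x c ∧ ∀ n, c n ∈ C := by
  have hfar (n : ℕ) : ∃ h ∈ C, (n : ℝ) < infDist x h :=
    exists_mem_image.1 (not_bddAbove_iff.1 hunbdd n)
  choose F hFC hF using hfar
  have htendsto : Tendsto (fun n => infDist x (F n)) atTop atTop :=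
    tendsto_atTop_mono (fun n => (hF n).le) tendsto_natCast_atTop_atTop
  obtain ⟨φ, hφ, hmono⟩ := strictMono_subseq_of_tendsto_atTop htendsto
  refine ⟨F ∘ φ, ⟨fun n => hhalf _ (hFC _), fun n => ?_, htendsto.comp hφ.tendsto_atTop⟩,
    fun n => hFC _⟩
  exact subset_of_infDist_lt (hchain.total (hFC _) (hFC _))
    (nonempty_of_infDist_pos ((Nat.cast_nonneg _).trans_lt (hF _))) (hmono n.lt_succ_self)

/-- The halfspaces of `Ω` at distance more than `N` from `x`. Since `infDist x ∅ = 0`, they are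
nonempty when `0 ≤ N`. -/
def farPart (x : X) (N : ℝ) (Ω : Set (Set X)) : Set (Set X) :=
  {h ∈ Ω | N < infDist x h}

theorem IsUBS.farPart (hΩ : IsUBS x σ Ω) {N : ℝ} (hN : 0 ≤ N) : IsUBS x σ (farPart x N Ω) := by
  obtain ⟨hsub, hinsep, c, hc, hcΩ⟩ := hΩ
  refine ⟨fun h hh => hsub hh.1, fun j hj h hh k hk hhj hjk => ?_, ?_⟩
  · have hj_nonempty : j.Nonempty := (nonempty_of_infDist_pos (hN.trans_lt hh.2)).mono hhj
    exact ⟨hinsep j hj h hh.1 k hk.1 hhj hjk,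
      hk.2.trans_le (infDist_le_infDist_of_subset hjk hj_nonempty)⟩
  · obtain ⟨m, hm⟩ := eventually_atTop.1 (hc.2.2.eventually_gt_atTop N)
    exact ⟨_, hc.shift m, fun n => ⟨hcΩ _, hm _ (Nat.le_add_left m n)⟩⟩

/-- The inseparable closure of a set of halfspaces: all halfspaces squeezed between two of its
members. -/
def insepClosure (S : Set (Set X)) : Set (Set X) :=
  {j | IsHalfspace j ∧ (∃ h ∈ S, h ⊆ j) ∧ ∃ k ∈ S, j ⊆ k}

theorem insep_insepClosure (S : Set (Set X)) : Insep (insepClosure S) := by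
  rintro j hj h ⟨-, ⟨h', hh', hh'h⟩, -⟩ k ⟨-, -, k', hk', hkk'⟩ hhj hjk
  exact ⟨hj, ⟨h', hh', hh'h.trans hhj⟩, k', hk', hjk.trans hkk'⟩

theorem Insep.insepClosure_subset (hΩ : Insep Ω) {S : Set (Set X)} (hS : S ⊆ Ω) :
    insepClosure S ⊆ Ω := by
  rintro j ⟨hj, ⟨h, hh, hhj⟩, k, hk, hjk⟩
  exact hΩ j hj h (hS hh) k (hS hk) hhj hjk

theorem IsUBS.insepClosure_range (hΩ : IsUBS x σ Ω) {c : ℕ → Set X} (hc : DivChain x c)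
    (hcΩ : ∀ n, c n ∈ Ω) : IsUBS x σ (insepClosure (range c)) :=
  ⟨(hΩ.2.1.insepClosure_subset (range_subset_iff.2 hcΩ)).trans hΩ.1, insep_insepClosure _, c, hc,
    fun n => ⟨hc.1 n, ⟨c n, mem_range_self n, subset_rfl⟩, c n, mem_range_self n, subset_rfl⟩⟩

theorem MinimalUBS.almostLE_of_subset (hΩ : MinimalUBS x σ Ω) (hΩ₁ : IsUBS x σ Ω₁)
    (hsub : Ω₁ ⊆ Ω) : AlmostLE x Ω Ω₁ :=
  hΩ.2 Ω₁ hΩ₁ ⟨0, fun _ hh => absurd (hsub hh.1) hh.2⟩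

theorem AlmostLE.not_bddAbove_inter (hle : AlmostLE x Ω Ω₁) {C : Set (Set X)} (hC : C ⊆ Ω)
    (hunbdd : ¬ BddAbove (infDist x '' C)) : ¬ BddAbove (infDist x '' (C ∩ Ω₁)) := by
  rintro ⟨B, hB⟩
  obtain ⟨M, hM⟩ := hle
  refine hunbdd ⟨max B M, forall_mem_image.2 fun h hh => ?_⟩
  by_cases hh₁ : h ∈ Ω₁
  · exact (hB (mem_image_of_mem _ ⟨hh, hh₁⟩)).trans (le_max_left _ _)
  · exact (hM h ⟨hC hh, hh₁⟩).trans (le_max_right _ _)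

theorem stronglyReducedUBS_of_finite {ι : Type*} [Finite ι] [Nonempty ι] {C : ι → Set (Set X)}
    (hdisj : Pairwise (Disjoint on C)) (hcover : ⋃ i, C i = Ω)
    (hchain : ∀ i, IsChain (· ⊆ ·) (C i))
    (hdiv : ∀ i, ∃ c : ℕ → Set X, DivChain x c ∧ ∀ n, c n ∈ C i) :
    StronglyReducedUBS x Ω := by
  let e := Finite.equivFin ι
  refine ⟨Nat.card ι, C ∘ e.symm, Nat.card_pos, fun i _ j _ hij => ?_, ?_,
    fun i => ⟨hchain _, hdiv _⟩⟩
  · exact hdisj (e.symm.injective.ne hij)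
  · exact (e.symm.surjective.iUnion_comp C).trans hcover

theorem MinimalUBS.stronglyReducedUBS_of_subset_farPart (hΩ : MinimalUBS x σ Ω)
    (hhalf : ∀ h ∈ Ω, IsHalfspace h) {ι : Type*} [Finite ι] {C : ι → Set (Set X)}
    (hdisj : Pairwise (Disjoint on C)) (hcover : ⋃ i, C i = Ω)
    (hchain : ∀ i, IsChain (· ⊆ ·) (C i)) {N : ℝ}
    (hN : ∀ i, (∃ d ∈ infDist x '' C i, N < d) → ¬ BddAbove (infDist x '' C i))
    (hsub : Ω₁ ⊆ farPart x N Ω) (hΩ₁ : IsUBS x σ Ω₁) : StronglyReducedUBS x Ω₁ := by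
  have hCΩ (i : ι) : C i ⊆ Ω := hcover ▸ subset_iUnion C i
  have hle : AlmostLE x Ω Ω₁ := hΩ.almostLE_of_subset hΩ₁ fun h hh => (hsub hh).1
  let J := {i // ¬ BddAbove (infDist x '' C i)}
  have hmem (h : Set X) (hh : h ∈ Ω₁) : ∃ i : J, h ∈ C i := by
    obtain ⟨i, hi⟩ := mem_iUnion.1 (hcover.symm ▸ (hsub hh).1)
    exact ⟨⟨i, hN i ⟨_, mem_image_of_mem _ hi, (hsub hh).2⟩⟩, hi⟩
  have : Nonempty J := by
    obtain ⟨c, -, hc⟩ := hΩ₁.2.2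
    exact ⟨(hmem _ (hc 0)).choose⟩
  have hchain₁ (i : J) : IsChain (· ⊆ ·) (C i ∩ Ω₁) := (hchain i).mono inter_subset_left
  refine stronglyReducedUBS_of_finite (C := fun i : J => C i ∩ Ω₁) (fun i j hij => ?_) ?_ hchain₁
    fun i => exists_divChain_of_not_bddAbove (fun h hh => hhalf h (hCΩ i hh.1)) (hchain₁ i)
      (hle.not_bddAbove_inter (hCΩ i) i.2)
  · exact (hdisj (Subtype.coe_injective.ne hij)).mono inter_subset_left inter_subset_left
  · rw [← iUnion_inter, inter_eq_right]
    exact fun h hh => mem_iUnion.2 (hmem h hh)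

theorem MinimalUBS.exists_stronglyReducedUBS_subset (hfr : HasFiniteRank X)
    (hσ : ∀ h ∈ σ, IsHalfspace h) (hinter : ∀ h ∈ σ, ∀ k ∈ σ, (h ∩ k).Nonempty)
    (hΩ : MinimalUBS x σ Ω) :
    ∃ Ω₀ ⊆ Ω, IsUBS x σ Ω₀ ∧ ∀ Ω₁ ⊆ Ω₀, IsUBS x σ Ω₁ → StronglyReducedUBS x Ω₁ := by
  obtain ⟨r, hr⟩ := hfr
  have hΩσ : Ω ⊆ σ := fun h hh => (hΩ.1.1 hh).1
  have hhalf (h) (hh : h ∈ Ω) : IsHalfspace h := hσ h (hΩσ hh)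
  obtain ⟨C, hdisj, hcover, hchain⟩ := hr.exists_chain_partition hhalf
    (fun h hh k hk => hinter h (hΩσ hh) k (hΩσ hk))
    (fun h hh hxh => (hΩ.1.1 hh).2 ⟨hhalf h hh, hxh⟩)
  obtain ⟨N, hN₀, hN⟩ := exists_nonneg_forall_not_bddAbove_of_lt fun i => infDist x '' C i
  exact ⟨farPart x N Ω, fun h hh => hh.1, hΩ.1.farPart hN₀, fun Ω₁ hsub hΩ₁ =>
    hΩ.stronglyReducedUBS_of_subset_farPart hhalf hdisj hcover hchain hN hsub hΩ₁⟩

theorem StronglyReducedUBS.exists_subset_lt_infDist (hΩ : StronglyReducedUBS x Ω) (hk : k ∈ Ω)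
    (hk_nonempty : k.Nonempty) (M : ℝ) : ∃ h ∈ Ω, h ⊆ k ∧ M < infDist x h := by
  obtain ⟨m, C, -, -, rfl, hC⟩ := hΩ
  obtain ⟨i, hki⟩ := mem_iUnion.1 hk
  obtain ⟨hchain, c, hc, hcC⟩ := hC i
  obtain ⟨n, hn⟩ := (hc.2.2.eventually_gt_atTop (max M (infDist x k))).exists
  obtain ⟨hMn, hkn⟩ := max_lt_iff.1 hn
  exact ⟨c n, mem_iUnion_of_mem i (hcC n),
    subset_of_infDist_lt (hchain.total (hcC n) hki) hk_nonempty hkn, hMn⟩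

theorem MinimalUBS.reducedUBS_of_stronglyReducedUBS (hΩ : MinimalUBS x σ Ω)
    (hsr : StronglyReducedUBS x Ω) : ReducedUBS x Ω := by
  rintro k hk ⟨c, hc, hcΩ, htransv⟩
  obtain ⟨M, hM⟩ : AlmostLE x Ω (insepClosure (range c)) :=
    hΩ.almostLE_of_subset (hΩ.1.insepClosure_range hc hcΩ)
      (hΩ.1.2.1.insepClosure_subset (range_subset_iff.2 hcΩ))
  obtain ⟨h, hh, hhk, hMh⟩ := hsr.exists_subset_lt_infDist hk (htransv 0).1.left M
  have hclosure : h ∈ insepClosure (range c) := by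
    by_contra hnot
    exact hMh.not_ge (hM h ⟨hh, hnot⟩)
  obtain ⟨-, ⟨_, ⟨m, rfl⟩, hmh⟩, -⟩ := hclosure
  obtain ⟨y, hyk, hym⟩ := (htransv m).2.2.1
  exact hyk (hhk (hmh hym))

end Halfspaces

theorem strongly_reduced_sub_UBS_exists_and_strongly_reduced_is_reduced_general
    {X : Type u} [MetricSpace X] (hfr : HasFiniteRank X) (x : X) (σ : Set (Set X))
    (hσ : ∀ h ∈ σ, IsHalfspace h) (hinter : ∀ h ∈ σ, ∀ k ∈ σ, (h ∩ k).Nonempty)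
    (Ω : Set (Set X)) (hΩ : MinimalUBS x σ Ω) :
    (∃ Ω₀ : Set (Set X), Ω₀ ⊆ Ω ∧ IsUBS x σ Ω₀ ∧ StronglyReducedUBS x Ω₀ ∧
      ∀ Ω₁ : Set (Set X), Ω₁ ⊆ Ω₀ → IsUBS x σ Ω₁ → StronglyReducedUBS x Ω₁) ∧
    (StronglyReducedUBS x Ω → ReducedUBS x Ω) := by
  obtain ⟨Ω₀, hsub, hΩ₀, hsr⟩ := hΩ.exists_stronglyReducedUBS_subset hfr hσ hinter
  exact ⟨⟨Ω₀, hsub, hΩ₀, hsr Ω₀ subset_rfl hΩ₀, hsr⟩, hΩ.reducedUBS_of_stronglyReducedUBS⟩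

/-- Let `X` be a complete, finite-rank median space, `x ∈ X`,
`σ` an ultrafilter on the halfspaces, and `Ω ⊆ σ \ σ_x` a minimal UBS.  Then
(a) there is a strongly reduced UBS contained in `Ω` all of whose sub-UBS's are
strongly reduced; and (b) if `Ω` is strongly reduced, then it is reduced. -/
theorem strongly_reduced_sub_UBS_exists_and_strongly_reduced_is_reduced
    {X : Type u} [MetricSpace X] [CompleteSpace X]
    (hX : IsMedianSpace X) (hfr : HasFiniteRank X)
    (x : X) (σ : Set (Set X)) (hσ : UltrafilterOn X σ)
    (Ω : Set (Set X)) (hΩ : MinimalUBS x σ Ω) :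
    (∃ Ω₀ : Set (Set X), Ω₀ ⊆ Ω ∧ IsUBS x σ Ω₀ ∧ StronglyReducedUBS x Ω₀ ∧
      ∀ Ω₁ : Set (Set X), Ω₁ ⊆ Ω₀ → IsUBS x σ Ω₁ → StronglyReducedUBS x Ω₁) ∧
    (StronglyReducedUBS x Ω → ReducedUBS x Ω) :=
  strongly_reduced_sub_UBS_exists_and_strongly_reduced_is_reduced_general hfr x σ hσ.1 hσ.2.1 Ω hΩ
end
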